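/- Let E be a finite set and let F : 2^E → ℝ₊ be a monotone submodular set function with multilinear extension f. Then for all x, y ∈ [0,1]^E, ⟨y, ∇f(x)⟩ ≥ f(y) − f(x). -/

import Mathlib

open Finset

/-- The multilinear extension of a set function `F : 2^E → ℝ`. -/
noncomputable def multilinearExt {E : Type*} [Fintype E] [DecidableEq E]
    (F : Finset E → ℝ) (x : E → ℝ) : ℝ :=
  ∑ S : Finset E, F S * (∏ e ∈ S, x e) * ∏ e ∈ Sᶜ, (1 - x e)

/-- The partial derivative `∂f/∂x(e)` of the multilinear extension at `x`. -/
noncomputable def multilinearGrad {E : Type*} [Fintype E] [DecidableEq E]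
    (F : Finset E → ℝ) (x : E → ℝ) (e : E) : ℝ :=
  deriv (fun t => multilinearExt F (Function.update x e t)) (x e)

noncomputable def mlV {E : Type*} [Fintype E] [DecidableEq E]
    (x : E → ℝ) (e : E) (S : Finset E) : ℝ :=
  (∏ i ∈ S, x i) * ∏ i ∈ (univ.erase e) \ S, (1 - x i)

theorem ml_split {E : Type*} [Fintype E] [DecidableEq E]
    (G : Finset E → ℝ) (x : E → ℝ) (e : E) :
    multilinearExt G x = ∑ S ∈ (univ.erase e).powerset,
      mlV x e S * ((1 - x e) * G S + x e * G (insert e S)) := by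
  unfold multilinearExt mlV
  have h1 : (univ : Finset (Finset E)) = (insert e (univ.erase e)).powerset := by
    ext S; simp
  rw [h1, Finset.sum_powerset_insert (by simp), ← Finset.sum_add_distrib]
  apply Finset.sum_congr rfl
  intro S hS
  have he : e ∉ S := by
    intro h
    have := Finset.mem_powerset.1 hS h
    simp at this
  have h2 : Sᶜ = insert e ((univ.erase e) \ S) := by
    ext i; by_cases hi : i = e
    · subst hi; simp [he]
    · simp [hi]
  have h3 : (insert e S)ᶜ = (univ.erase e) \ S := by
    ext i; by_cases hi : i = e
    · subst hi; simp
    · simp [hi]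
  rw [h3, h2, Finset.prod_insert he, Finset.prod_insert (by simp)]
  ring

theorem mlV_update {E : Type*} [Fintype E] [DecidableEq E]
    (x : E → ℝ) (e : E) (t : ℝ) (S : Finset E) (hS : S ∈ (univ.erase e).powerset) :
    mlV (Function.update x e t) e S = mlV x e S := by
  unfold mlV
  congr 1
  · apply Finset.prod_congr rfl
    intro i hi
    have := Finset.mem_powerset.1 hS hi
    rw [Function.update_of_ne (by simpa using this)]
  · apply Finset.prod_congr rfl
    intro i hi
    simp only [mem_sdiff, mem_erase, mem_univ, and_true] at hi
    rw [Function.update_of_ne hi.1]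

theorem ml_grad {E : Type*} [Fintype E] [DecidableEq E]
    (F : Finset E → ℝ) (x : E → ℝ) (e : E) :
    multilinearGrad F x e = ∑ S ∈ (univ.erase e).powerset,
      mlV x e S * (F (insert e S) - F S) := by
  have h : (fun t => multilinearExt F (Function.update x e t)) = fun t =>
      (∑ S ∈ (univ.erase e).powerset, mlV x e S * (F (insert e S) - F S)) * t
      + ∑ S ∈ (univ.erase e).powerset, mlV x e S * F S := by
    funext t
    rw [ml_split F _ e, Finset.sum_mul, ← Finset.sum_add_distrib]
    apply Finset.sum_congr rfl
    intro S hS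
    rw [mlV_update x e t S hS, Function.update_self]
    ring
  unfold multilinearGrad
  rw [h]
  simp

theorem ml_add {E : Type*} [Fintype E] [DecidableEq E] (F G : Finset E → ℝ) (x : E → ℝ) :
    multilinearExt (fun S => F S + G S) x = multilinearExt F x + multilinearExt G x := by
  unfold multilinearExt
  rw [← Finset.sum_add_distrib]
  exact Finset.sum_congr rfl fun S _ => by ring

theorem ml_sum {E : Type*} [Fintype E] [DecidableEq E] (c : E → ℝ)
    (G : E → Finset E → ℝ) (x : E → ℝ) :
    multilinearExt (fun S => ∑ e, c e * G e S) x = ∑ e, c e * multilinearExt (G e) x := by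
  unfold multilinearExt
  simp only [Finset.mul_sum, Finset.sum_mul]
  rw [Finset.sum_comm]
  exact Finset.sum_congr rfl fun S _ => Finset.sum_congr rfl fun S _ => by ring

theorem ml_const {E : Type*} [Fintype E] [DecidableEq E] (c : ℝ) (x : E → ℝ) :
    multilinearExt (fun _ => c) x = c := by
  have := Finset.prod_add (fun e => x e) (fun e => 1 - x e) (univ : Finset E)
  simp only [add_sub_cancel, Finset.prod_const_one, Finset.powerset_univ] at this
  unfold multilinearExt
  simp only [mul_assoc]
  rw [← Finset.mul_sum]
  simp only [Finset.compl_eq_univ_sdiff]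
  rw [← this, mul_one]

theorem ml_mono {E : Type*} [Fintype E] [DecidableEq E] (F G : Finset E → ℝ) (x : E → ℝ)
    (hx : ∀ e, x e ∈ Set.Icc (0 : ℝ) 1) (h : ∀ S, F S ≤ G S) :
    multilinearExt F x ≤ multilinearExt G x := by
  unfold multilinearExt
  apply Finset.sum_le_sum
  intro S _
  rw [mul_assoc, mul_assoc]
  exact mul_le_mul_of_nonneg_right (h S) (mul_nonneg
    (Finset.prod_nonneg fun e _ => (hx e).1)
    (Finset.prod_nonneg fun e _ => sub_nonneg.2 (hx e).2))

theorem ml_ind {E : Type*} [Fintype E] [DecidableEq E] (y : E → ℝ) (e : E) :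
    multilinearExt (fun T => if e ∈ T then 1 else 0) y = y e := by
  have h1 := ml_const 1 y
  rw [ml_split _ y e] at h1 ⊢
  have h2 := congrArg (fun r => y e * r) h1
  simp only [mul_one] at h2
  rw [Finset.mul_sum] at h2
  refine Eq.trans ?_ h2
  apply Finset.sum_congr rfl
  intro S hS
  have he : e ∉ S := by
    intro h
    have := Finset.mem_powerset.1 hS h
    simp at this
  simp [he]
  ring

theorem ml_marg {E : Type*} [Fintype E] [DecidableEq E] (F : Finset E → ℝ)
    (hmono : ∀ S T : Finset E, S ⊆ T → F S ≤ F T) (x : E → ℝ)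
    (hx : ∀ e, x e ∈ Set.Icc (0 : ℝ) 1) (e : E) :
    multilinearExt (fun S => F (insert e S) - F S) x ≤ multilinearGrad F x e := by
  rw [ml_split _ x e, ml_grad]
  apply Finset.sum_le_sum
  intro S _
  apply mul_le_mul_of_nonneg_left
  · have h := hmono S (insert e S) (Finset.subset_insert _ _)
    simp only [Finset.insert_idem]
    nlinarith [(hx e).1]
  · exact mul_nonneg (Finset.prod_nonneg fun e _ => (hx e).1)
      (Finset.prod_nonneg fun e _ => sub_nonneg.2 (hx e).2)

theorem sub_bound {E : Type*} [DecidableEq E] (F : Finset E → ℝ)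
    (hsub : ∀ S T : Finset E, S ⊆ T → ∀ e ∉ T,
      F (insert e T) - F T ≤ F (insert e S) - F S) (S T : Finset E) :
    F (S ∪ T) ≤ F S + ∑ e ∈ T, (F (insert e S) - F S) := by
  induction T using Finset.induction_on with
  | empty => simp
  | insert a T ha ih =>
    rw [Finset.sum_insert ha, Finset.union_insert]
    by_cases h : a ∈ S ∪ T
    · rw [Finset.insert_eq_of_mem h]
      have h' : a ∈ S := by simpa [ha] using h
      rw [Finset.insert_eq_of_mem h']
      linarith
    · have := hsub S (S ∪ T) Finset.subset_union_left a h
      linarith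

/-- For a nonnegative monotone submodular `F : 2^E → ℝ₊` with multilinear extension `f`,
for all `x, y ∈ [0,1]^E`, `⟨y, ∇f(x)⟩ ≥ f(y) − f(x)`. -/
theorem inner_grad_ge_diff {E : Type*} [Fintype E] [DecidableEq E]
    (F : Finset E → ℝ) (hFnn : ∀ S, 0 ≤ F S)
    (hmono : ∀ S T : Finset E, S ⊆ T → F S ≤ F T)
    (hsub : ∀ S T : Finset E, S ⊆ T → ∀ e ∉ T,
      F (insert e T) - F T ≤ F (insert e S) - F S)
    (x y : E → ℝ)
    (hx : ∀ e, x e ∈ Set.Icc (0 : ℝ) 1)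
    (hy : ∀ e, y e ∈ Set.Icc (0 : ℝ) 1) :
    multilinearExt F y - multilinearExt F x ≤ ∑ e, y e * multilinearGrad F x e := by
  have key : ∀ S, multilinearExt F y ≤ F S + ∑ e, y e * (F (insert e S) - F S) := by
    intro S
    have h := ml_mono F (fun T => F S + ∑ e, (F (insert e S) - F S) * (if e ∈ T then 1 else 0))
      y hy (by
        intro T
        have h1 := hmono T (S ∪ T) Finset.subset_union_right
        have h2 := sub_bound F hsub S T
        simp only [mul_ite, mul_one, mul_zero, Finset.sum_ite_mem, Finset.univ_inter]
        linarith)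
    rw [ml_add, ml_const, ml_sum] at h
    simp only [ml_ind] at h
    simpa only [mul_comm] using h
  have h := ml_mono (fun _ => multilinearExt F y) _ x hx key
  rw [ml_const, ml_add, ml_sum y (fun e S => F (insert e S) - F S)] at h
  have h2 : ∑ e, y e * multilinearExt (fun S => F (insert e S) - F S) x
      ≤ ∑ e, y e * multilinearGrad F x e :=
    Finset.sum_le_sum fun e _ => mul_le_mul_of_nonneg_left (ml_marg F hmono x hx e) (hy e).1
  linarith
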